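/- For every ε > 0 there exists C_ε > 0 such that for every n₁, n₂ ≥ 1, ‖e_{n₁} e_{n₂}′‖_{L²(Θ)} ≤ C_ε (min(n₁, n₂))^ε ‖e_{n₂}′‖_{L²(Θ)}. -/

import Mathlib

/-- The Bessel function of order zero, defined by its power series. -/
noncomputable def J0 (x : ℝ) : ℝ :=
  ∑' j : ℕ, ((-1 : ℝ) ^ j / ((Nat.factorial j : ℝ)) ^ 2) * (x / 2) ^ (2 * j)

/-- The `L²(Θ)` norm of `J₀(z_n ·)`. -/
noncomputable def besselL2 (z : ℕ → ℝ) (n : ℕ) : ℝ :=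
  Real.sqrt (2 * Real.pi * ∫ r in (0 : ℝ)..1, (J0 (z n * r)) ^ 2 * r)

/-- The normalized Dirichlet eigenfunction `e_n(r) = J₀(z_n r)/‖J₀(z_n ·)‖_{L²(Θ)}`. -/
noncomputable def efun (z : ℕ → ℝ) (n : ℕ) (r : ℝ) : ℝ :=
  J0 (z n * r) / besselL2 z n

/-- The radial derivative `e_n′(r) = z_n J₀′(z_n r)/‖J₀(z_n ·)‖_{L²(Θ)}`. -/
noncomputable def efun' (z : ℕ → ℝ) (n : ℕ) (r : ℝ) : ℝ :=
  z n * deriv J0 (z n * r) / besselL2 z n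

open Real Set MeasureTheory

/-!
The substitution `J₀(x) = y(x² / 4)`, with `(t y′)′ = -y`, gives Bessel's equation, and
`u = √x J₀` then solves `u″ = -q u` with the decreasing frequency `q = 1 + 1 / (4x²)`. Hence
`q u² + u′²` decreases, which bounds `x J₀²` and `x J₀′²` above, while `u² + u′² / q` increases,
which bounds `x J₀′²` below at the zeros of `J₀`. With the Lommel integrals this gives
`e_n² ≲ min(z_n, 1/r)`, `e_n′² ≲ z_n² min(z_n, 1/r)` and `‖e_n′‖ = z_n`, so integrating the product
against `r dr` loses only the factor `1 + log (min (z_{n₁}, z_{n₂}))`. Sturm comparison of `u` with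
`sin (x - a)` puts a zero in every interval `(a, a + π]`, so `z_n` grows at most linearly and the
logarithm is absorbed by `min(n₁, n₂)^ε`.
-/

section PowerSeries

variable {𝕜 : Type*} [NontriviallyNormedField 𝕜] {c : ℕ → 𝕜} {f : 𝕜 → 𝕜}

theorem hasFPowerSeriesOnBall_top_of_hasSum (hf : ∀ t, HasSum (fun n ↦ c n * t ^ n) (f t)) :
    HasFPowerSeriesOnBall f (.ofScalars 𝕜 c) 0 ⊤ where
  r_le := by
    refine ENNReal.le_of_forall_nnreal_lt fun r _ ↦ ?_
    obtain ⟨t, ht⟩ := NormedField.exists_lt_norm 𝕜 r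
    refine le_trans (b := (‖t‖₊ : ENNReal)) (by exact_mod_cast ht.le) ?_
    refine FormalMultilinearSeries.le_radius_of_tendsto _ (l := 0) ?_
    simpa [FormalMultilinearSeries.ofScalars_norm] using (hf t).summable.tendsto_atTop_zero.norm
  r_pos := ENNReal.zero_lt_top
  hasSum {t} _ := by
    simpa [FormalMultilinearSeries.ofScalars_apply_eq, mul_comm] using hf t

theorem hasSum_deriv_of_hasSum [CompleteSpace 𝕜] (hf : ∀ t, HasSum (fun n ↦ c n * t ^ n) (f t))
    (t : 𝕜) : HasSum (fun n ↦ (n + 1) * c (n + 1) * t ^ n) (deriv f t) := by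
  have h := (hasFPowerSeriesOnBall_top_of_hasSum hf).fderiv.hasSum (y := t) (by simp)
  have h1 := h.mapL (ContinuousLinearMap.apply 𝕜 𝕜 (1 : 𝕜))
  simpa [FormalMultilinearSeries.apply_eq_pow_smul_coeff, mul_comm, mul_left_comm] using h1

theorem hasSum_mul_deriv_of_hasSum [CompleteSpace 𝕜]
    (hf : ∀ t, HasSum (fun n ↦ c n * t ^ n) (f t)) (t : 𝕜) :
    HasSum (fun n ↦ n * c n * t ^ n) (t * deriv f t) := by
  rw [← hasSum_nat_add_iff' 1]
  simpa [pow_succ', mul_assoc, mul_left_comm] using (hasSum_deriv_of_hasSum hf t).mul_left t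

end PowerSeries

/-- The entire function `y` with `J₀(x) = y(x² / 4)`, which turns Bessel's equation into
`(t y′)′ = -y`. -/
noncomputable def besselProfile (t : ℝ) : ℝ :=
  ∑' j : ℕ, (-1) ^ j / (Nat.factorial j : ℝ) ^ 2 * t ^ j

theorem hasSum_besselProfile (t : ℝ) :
    HasSum (fun j : ℕ ↦ (-1) ^ j / (Nat.factorial j : ℝ) ^ 2 * t ^ j) (besselProfile t) := by
  refine (Summable.of_norm_bounded (Real.summable_pow_div_factorial |t|) fun j ↦ ?_).hasSum
  have hj : (1 : ℝ) ≤ j.factorial := mod_cast j.factorial_pos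
  rw [norm_mul, norm_div, norm_pow, norm_neg, norm_one, one_pow, norm_pow, Real.norm_natCast,
    norm_pow, Real.norm_eq_abs, one_div_mul_eq_div]
  gcongr
  exact le_self_pow₀ hj two_ne_zero

theorem contDiff_besselProfile : ContDiff ℝ 2 besselProfile :=
  contDiffOn_univ.1 <| by
    simpa using (hasFPowerSeriesOnBall_top_of_hasSum hasSum_besselProfile).analyticOnNhd.contDiffOn

theorem deriv_mul_deriv_besselProfile (t : ℝ) :
    deriv (fun t ↦ t * deriv besselProfile t) t = -besselProfile t := by
  refine (hasSum_deriv_of_hasSum (hasSum_mul_deriv_of_hasSum hasSum_besselProfile) t).unique ?_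
  refine (hasSum_besselProfile t).neg.congr_fun fun j ↦ ?_
  push_cast [Nat.factorial_succ]
  field_simp
  ring

theorem J0_eq_besselProfile (x : ℝ) : J0 x = besselProfile (x ^ 2 / 4) := by
  refine tsum_congr fun j ↦ ?_
  rw [pow_mul]
  congr 2
  ring

theorem contDiff_J0 : ContDiff ℝ 2 J0 := by
  rw [funext J0_eq_besselProfile]
  exact contDiff_besselProfile.comp (by fun_prop)

theorem hasDerivAt_J0 (x : ℝ) : HasDerivAt J0 (deriv J0 x) x :=
  (contDiff_J0.differentiable two_ne_zero x).hasDerivAt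

theorem continuous_J0 : Continuous J0 := contDiff_J0.continuous

theorem continuous_deriv_J0 : Continuous (deriv J0) := contDiff_J0.continuous_deriv (by norm_num)

theorem hasDerivAt_sq_div_four (x : ℝ) : HasDerivAt (fun x : ℝ ↦ x ^ 2 / 4) (x / 2) x :=
  ((hasDerivAt_pow 2 x).div_const 4).congr_deriv (by push_cast; ring)

theorem deriv_J0 (x : ℝ) : deriv J0 x = x / 2 * deriv besselProfile (x ^ 2 / 4) := by
  have hy := (contDiff_besselProfile.differentiable two_ne_zero (x ^ 2 / 4)).hasDerivAt
  rw [funext J0_eq_besselProfile, mul_comm]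
  exact (hy.comp x (hasDerivAt_sq_div_four x)).deriv

theorem J0_zero : J0 0 = 1 := by
  rw [J0, tsum_eq_single 0 fun j hj ↦ by simp [hj]]
  simp

theorem deriv_J0_zero : deriv J0 0 = 0 := by simp [deriv_J0]

theorem hasDerivAt_mul_deriv_J0 (x : ℝ) :
    HasDerivAt (fun x ↦ x * deriv J0 x) (-(x * J0 x)) x := by
  have hg : HasDerivAt (fun t ↦ t * deriv besselProfile t) (-besselProfile (x ^ 2 / 4))
      (x ^ 2 / 4) := by
    rw [← deriv_mul_deriv_besselProfile]
    exact (differentiableAt_id.mul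
      (contDiff_besselProfile.differentiable_deriv_two _)).hasDerivAt
  have h := (hg.comp x (hasDerivAt_sq_div_four x)).const_mul 2
  convert! h using 1
  · funext x
    simp only [deriv_J0, Function.comp_apply]
    ring
  · rw [J0_eq_besselProfile]
    ring

theorem hasDerivAt_deriv_J0 {x : ℝ} (hx : x ≠ 0) :
    HasDerivAt (deriv J0) (-deriv J0 x / x - J0 x) x := by
  have h := (hasDerivAt_mul_deriv_J0 x).div (hasDerivAt_id x) hx
  refine (h.congr_of_eventuallyEq ?_).congr_deriv ?_
  · filter_upwards [eventually_ne_nhds hx] with y hy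
    simp [hy]
  · simp only [id]
    field_simp
    ring

section Oscillator

variable {u v q q' : ℝ → ℝ} {s : Set ℝ} {a : ℝ}

theorem antitoneOn_energy_of_antitone_frequency (hs : Convex ℝ s)
    (hu : ∀ x ∈ s, HasDerivWithinAt u (v x) s x)
    (hv : ∀ x ∈ s, HasDerivWithinAt v (-(q x * u x)) s x)
    (hq : ∀ x ∈ s, HasDerivWithinAt q (q' x) s x) (hq' : ∀ x ∈ s, q' x ≤ 0) :
    AntitoneOn (fun x ↦ q x * u x ^ 2 + v x ^ 2) s := by
  have hE : ∀ x ∈ s, HasDerivWithinAt (fun x ↦ q x * u x ^ 2 + v x ^ 2) (q' x * u x ^ 2) s x :=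
    fun x hx ↦ (((hq x hx).mul ((hu x hx).pow 2)).add ((hv x hx).pow 2)).congr_deriv <| by
      simp only [Pi.pow_apply]
      push_cast
      ring
  exact antitoneOn_of_hasDerivWithinAt_nonpos hs (fun x hx ↦ (hE x hx).continuousWithinAt)
    (fun x hx ↦ (hE x (interior_subset hx)).mono interior_subset)
    fun x hx ↦ mul_nonpos_of_nonpos_of_nonneg (hq' x (interior_subset hx)) (sq_nonneg _)

theorem monotoneOn_sq_add_sq_div_of_antitone_frequency (hs : Convex ℝ s)
    (hu : ∀ x ∈ s, HasDerivWithinAt u (v x) s x)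
    (hv : ∀ x ∈ s, HasDerivWithinAt v (-(q x * u x)) s x)
    (hq : ∀ x ∈ s, HasDerivWithinAt q (q' x) s x) (hq' : ∀ x ∈ s, q' x ≤ 0)
    (hq0 : ∀ x ∈ s, q x ≠ 0) :
    MonotoneOn (fun x ↦ u x ^ 2 + v x ^ 2 / q x) s := by
  have hE : ∀ x ∈ s, HasDerivWithinAt (fun x ↦ u x ^ 2 + v x ^ 2 / q x)
      (-q' x * (v x / q x) ^ 2) s x :=
    fun x hx ↦ (((hu x hx).pow 2).add
      (((hv x hx).pow 2).div (hq x hx) (hq0 x hx))).congr_deriv <| by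
      have := hq0 x hx
      simp only [Pi.pow_apply]
      push_cast
      field_simp
      ring
  exact monotoneOn_of_hasDerivWithinAt_nonneg hs (fun x hx ↦ (hE x hx).continuousWithinAt)
    (fun x hx ↦ (hE x (interior_subset hx)).mono interior_subset)
    fun x hx ↦ mul_nonneg (neg_nonneg.2 (hq' x (interior_subset hx))) (sq_nonneg _)

theorem exists_mem_Ioc_nonpos_of_one_le_frequency
    (hu : ∀ x ∈ Icc a (a + π), HasDerivWithinAt u (v x) (Icc a (a + π)) x)
    (hv : ∀ x ∈ Icc a (a + π), HasDerivWithinAt v (-(q x * u x)) (Icc a (a + π)) x)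
    (hq : ∀ x ∈ Icc a (a + π), 1 ≤ q x) :
    ∃ x ∈ Ioc a (a + π), u x ≤ 0 := by
  by_contra! hpos
  have hle : a ≤ a + π := by linarith [pi_pos]
  have hua : 0 ≤ u a := by
    have hcl : closure (Ioc a (a + π)) = Icc a (a + π) := closure_Ioc (by linarith [pi_pos])
    refine le_on_closure (f := fun _ ↦ 0) (fun x hx ↦ (hpos x hx).le) continuousOn_const ?_
      (hcl ▸ left_mem_Icc.2 hle)
    exact hcl ▸ fun x hx ↦ (hu x hx).continuousWithinAt
  -- The Wronskian of `u` and the comparison solution `sin (x - a)`.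
  let W : ℝ → ℝ := fun x ↦ v x * sin (x - a) - u x * cos (x - a)
  have hW : ∀ x ∈ Icc a (a + π),
      HasDerivWithinAt W (-((q x - 1) * u x * sin (x - a))) (Icc a (a + π)) x := fun x hx ↦ by
    have hid := ((hasDerivAt_id x).sub_const a).hasDerivWithinAt (s := Icc a (a + π))
    refine (((hv x hx).mul hid.sin).sub ((hu x hx).mul hid.cos)).congr_deriv ?_
    simp only [id]
    ring
  have hanti : AntitoneOn W (Icc a (a + π)) := by
    refine antitoneOn_of_hasDerivWithinAt_nonpos (convex_Icc _ _)
      (fun x hx ↦ (hW x hx).continuousWithinAt)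
      (fun x hx ↦ (hW x (interior_subset hx)).mono interior_subset) fun x hx ↦ ?_
    rw [interior_Icc] at hx
    have hsin := sin_nonneg_of_nonneg_of_le_pi (sub_nonneg.2 hx.1.le) (by linarith [hx.2])
    have hq1 := sub_nonneg.2 (hq x (Ioo_subset_Icc_self hx))
    exact neg_nonpos.2 (mul_nonneg (mul_nonneg hq1 (hpos x (Ioo_subset_Ioc_self hx)).le) hsin)
  have hends := hanti (left_mem_Icc.2 hle) (right_mem_Icc.2 hle) hle
  have hub := hpos (a + π) (right_mem_Ioc.2 (by linarith [pi_pos]))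
  simp only [W, add_sub_cancel_left, sub_self, sin_pi, cos_pi, sin_zero, cos_zero] at hends
  linarith

theorem exists_mem_Ioc_eq_zero_of_one_le_frequency
    (hu : ∀ x ∈ Icc a (a + π), HasDerivWithinAt u (v x) (Icc a (a + π)) x)
    (hv : ∀ x ∈ Icc a (a + π), HasDerivWithinAt v (-(q x * u x)) (Icc a (a + π)) x)
    (hq : ∀ x ∈ Icc a (a + π), 1 ≤ q x) :
    ∃ x ∈ Ioc a (a + π), u x = 0 := by
  obtain ⟨x, hx, hux⟩ := exists_mem_Ioc_nonpos_of_one_le_frequency hu hv hq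
  obtain ⟨y, hy, huy⟩ := exists_mem_Ioc_nonpos_of_one_le_frequency (u := -u) (v := -v)
    (fun x hx ↦ (hu x hx).neg) (fun x hx ↦ (hv x hx).neg.congr_deriv (by simp)) hq
  have hcont : ContinuousOn u (Ioc a (a + π)) :=
    fun x hx ↦ ((hu x (Ioc_subset_Icc_self hx)).continuousWithinAt).mono Ioc_subset_Icc_self
  exact isPreconnected_Ioc.intermediate_value hx hy hcont ⟨hux, by simpa using huy⟩

end Oscillator

/-- The Liouville transform `√x J₀(x)`, which solves `u″ = -(1 + 1 / (4x²)) u` on `(0, ∞)`. -/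
noncomputable def liouvilleJ0 (x : ℝ) : ℝ := √x * J0 x

/-- The derivative of `liouvilleJ0` on `(0, ∞)`, in terms of `J₀` and `J₀′`. -/
noncomputable def liouvilleJ0' (x : ℝ) : ℝ := √x * (deriv J0 x + J0 x / (2 * x))

/-- The squared frequency `1 + 1 / (4x²)` of the equation solved by `liouvilleJ0`. -/
noncomputable def liouvilleFreq (x : ℝ) : ℝ := 1 + 1 / (4 * x ^ 2)

section Liouville

variable {x : ℝ}

theorem hasDerivAt_sqrt_div (hx : 0 < x) : HasDerivAt (√·) (√x / (2 * x)) x := by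
  refine (hasDerivAt_sqrt hx.ne').congr_deriv ?_
  rw [div_eq_div_iff (by positivity) (by positivity)]
  linear_combination -2 * sq_sqrt hx.le

theorem hasDerivAt_liouvilleJ0 (hx : 0 < x) : HasDerivAt liouvilleJ0 (liouvilleJ0' x) x :=
  ((hasDerivAt_sqrt_div hx).mul (hasDerivAt_J0 x)).congr_deriv (by rw [liouvilleJ0']; ring)

theorem hasDerivAt_liouvilleJ0' (hx : 0 < x) :
    HasDerivAt liouvilleJ0' (-(liouvilleFreq x * liouvilleJ0 x)) x := by
  have hdiv := (hasDerivAt_J0 x).div ((hasDerivAt_id x).const_mul 2) (by simpa using hx.ne')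
  refine ((hasDerivAt_sqrt_div hx).mul ((hasDerivAt_deriv_J0 hx.ne').add hdiv)).congr_deriv ?_
  simp only [liouvilleFreq, liouvilleJ0, id, Pi.add_apply, Pi.div_apply]
  field_simp
  ring

theorem hasDerivAt_liouvilleFreq (hx : x ≠ 0) :
    HasDerivAt liouvilleFreq (-(1 / (2 * x ^ 3))) x := by
  have h := ((hasDerivAt_const x (1 : ℝ)).div ((hasDerivAt_pow 2 x).const_mul 4)
    (by positivity)).const_add 1
  refine h.congr_deriv ?_
  push_cast
  field_simp
  ring

theorem one_le_liouvilleFreq (x : ℝ) : 1 ≤ liouvilleFreq x :=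
  le_add_of_nonneg_right (by positivity)

theorem liouvilleJ0_sq (hx : 0 ≤ x) : liouvilleJ0 x ^ 2 = x * J0 x ^ 2 := by
  rw [liouvilleJ0, mul_pow, sq_sqrt hx]

theorem liouvilleJ0'_sq (hx : 0 ≤ x) :
    liouvilleJ0' x ^ 2 = x * (deriv J0 x + J0 x / (2 * x)) ^ 2 := by
  rw [liouvilleJ0', mul_pow, sq_sqrt hx]

theorem antitoneOn_liouvilleJ0_energy :
    AntitoneOn (fun x ↦ liouvilleFreq x * liouvilleJ0 x ^ 2 + liouvilleJ0' x ^ 2) (Ioi 0) :=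
  antitoneOn_energy_of_antitone_frequency (convex_Ioi 0)
    (fun _ hx ↦ (hasDerivAt_liouvilleJ0 hx).hasDerivWithinAt)
    (fun _ hx ↦ (hasDerivAt_liouvilleJ0' hx).hasDerivWithinAt)
    (fun _ hx ↦ (hasDerivAt_liouvilleFreq (ne_of_gt hx)).hasDerivWithinAt)
    fun x (hx : 0 < x) ↦ neg_nonpos.2 (by positivity)

theorem monotoneOn_liouvilleJ0_amplitude :
    MonotoneOn (fun x ↦ liouvilleJ0 x ^ 2 + liouvilleJ0' x ^ 2 / liouvilleFreq x) (Ioi 0) :=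
  monotoneOn_sq_add_sq_div_of_antitone_frequency (convex_Ioi 0)
    (fun _ hx ↦ (hasDerivAt_liouvilleJ0 hx).hasDerivWithinAt)
    (fun _ hx ↦ (hasDerivAt_liouvilleJ0' hx).hasDerivWithinAt)
    (fun _ hx ↦ (hasDerivAt_liouvilleFreq (ne_of_gt hx)).hasDerivWithinAt)
    (fun x (hx : 0 < x) ↦ neg_nonpos.2 (by positivity))
    fun x _ ↦ (zero_lt_one.trans_le (one_le_liouvilleFreq x)).ne'

theorem exists_mem_Ioc_J0_eq_zero {a : ℝ} (ha : 0 < a) : ∃ x ∈ Ioc a (a + π), J0 x = 0 := by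
  obtain ⟨x, hx, hux⟩ := exists_mem_Ioc_eq_zero_of_one_le_frequency (a := a)
    (fun x hx ↦ (hasDerivAt_liouvilleJ0 (ha.trans_le hx.1)).hasDerivWithinAt)
    (fun x hx ↦ (hasDerivAt_liouvilleJ0' (ha.trans_le hx.1)).hasDerivWithinAt)
    fun x _ ↦ one_le_liouvilleFreq x
  have hsqrt : √x ≠ 0 := (sqrt_pos.2 (ha.trans hx.1)).ne'
  exact ⟨x, hx, (mul_eq_zero.1 hux).resolve_left hsqrt⟩

end Liouville

section Bounds

variable {x : ℝ}

theorem J0_sq_add_deriv_J0_sq_le_one (hx : 0 ≤ x) : J0 x ^ 2 + deriv J0 x ^ 2 ≤ 1 := by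
  have hanti : AntitoneOn (fun x ↦ J0 x ^ 2 + deriv J0 x ^ 2) (Ici 0) := by
    refine antitoneOn_of_hasDerivWithinAt_nonpos (f' := fun x ↦ -(2 * deriv J0 x ^ 2 / x))
      (convex_Ici 0) ((continuous_J0.pow 2).add (continuous_deriv_J0.pow 2)).continuousOn
      (fun y hy ↦ ?_) fun y hy ↦ ?_
    · have hy0 : y ≠ 0 := (by simpa using hy : 0 < y).ne'
      refine (((hasDerivAt_J0 y).pow 2).add
        ((hasDerivAt_deriv_J0 hy0).pow 2)).hasDerivWithinAt.congr_deriv ?_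
      push_cast
      field_simp
      ring
    · have hy0 : 0 < y := by simpa using hy
      exact neg_nonpos.2 (by positivity)
  simpa [J0_zero, deriv_J0_zero] using hanti self_mem_Ici hx hx

theorem one_sub_le_J0 (hx : 0 ≤ x) : 1 - x ≤ J0 x := by
  have hbound : ∀ y ∈ Ici (0 : ℝ), ‖deriv J0 y‖ ≤ 1 := fun y hy ↦
    (sq_le_one_iff_abs_le_one _).1 <| by
      linarith [J0_sq_add_deriv_J0_sq_le_one hy, sq_nonneg (J0 y)]
  have h := (convex_Ici 0).norm_image_sub_le_of_norm_hasDerivWithin_le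
    (fun y _ ↦ (hasDerivAt_J0 y).hasDerivWithinAt) hbound self_mem_Ici hx
  rw [J0_zero, norm_eq_abs, norm_eq_abs, sub_zero, abs_of_nonneg hx] at h
  linarith [(abs_le.1 h).1]

theorem one_le_of_J0_eq_zero (hx : 0 ≤ x) (h0 : J0 x = 0) : 1 ≤ x := by
  linarith [one_sub_le_J0 hx]

theorem liouvilleJ0_energy_le_two (hx : 1 / 2 ≤ x) :
    liouvilleFreq x * liouvilleJ0 x ^ 2 + liouvilleJ0' x ^ 2 ≤ 2 := by
  have hx0 : 0 < x := by linarith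
  refine (antitoneOn_liouvilleJ0_energy (a := 1 / 2) (by simp) hx0 hx).trans ?_
  beta_reduce
  have h := J0_sq_add_deriv_J0_sq_le_one (x := 1 / 2) (by norm_num)
  rw [liouvilleJ0_sq (by norm_num), liouvilleJ0'_sq (by norm_num), liouvilleFreq]
  nlinarith [sq_nonneg (J0 (1 / 2) - deriv J0 (1 / 2)), sq_nonneg (deriv J0 (1 / 2))]

theorem mul_J0_sq_le_two (hx : 0 ≤ x) : x * J0 x ^ 2 ≤ 2 := by
  rcases le_total x (1 / 2) with hx2 | hx2
  · nlinarith [J0_sq_add_deriv_J0_sq_le_one hx, sq_nonneg (J0 x), sq_nonneg (deriv J0 x)]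
  · rw [← liouvilleJ0_sq hx]
    nlinarith [liouvilleJ0_energy_le_two hx2, one_le_liouvilleFreq x, sq_nonneg (liouvilleJ0 x),
      sq_nonneg (liouvilleJ0' x)]

theorem mul_deriv_J0_sq_le_two_mul_energy (hx : 0 < x) :
    x * deriv J0 x ^ 2 ≤ 2 * (liouvilleFreq x * liouvilleJ0 x ^ 2 + liouvilleJ0' x ^ 2) := by
  have hsq : 2 * (liouvilleFreq x * liouvilleJ0 x ^ 2 + liouvilleJ0' x ^ 2) - x * deriv J0 x ^ 2
      = ((x * deriv J0 x + J0 x) ^ 2 + 2 * (x * J0 x) ^ 2) / x := by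
    rw [liouvilleJ0_sq hx.le, liouvilleJ0'_sq hx.le, liouvilleFreq]
    field_simp
    ring
  exact sub_nonneg.1 (hsq ▸ by positivity)

theorem mul_deriv_J0_sq_le_four (hx : 0 ≤ x) : x * deriv J0 x ^ 2 ≤ 4 := by
  rcases le_total x (1 / 2) with hx2 | hx2
  · nlinarith [J0_sq_add_deriv_J0_sq_le_one hx, sq_nonneg (J0 x), sq_nonneg (deriv J0 x)]
  · linarith [mul_deriv_J0_sq_le_two_mul_energy (x := x) (by linarith),
      liouvilleJ0_energy_le_two hx2]

theorem J0_sq_le_four_mul_min (hx : 0 < x) : J0 x ^ 2 ≤ 4 * min 1 x⁻¹ := by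
  rw [mul_min_of_nonneg _ _ zero_le_four, ← div_eq_mul_inv, le_min_iff, le_div_iff₀' hx]
  constructor
  · linarith [J0_sq_add_deriv_J0_sq_le_one hx.le, sq_nonneg (deriv J0 x)]
  · linarith [mul_J0_sq_le_two hx.le]

theorem deriv_J0_sq_le_four_mul_min (hx : 0 < x) : deriv J0 x ^ 2 ≤ 4 * min 1 x⁻¹ := by
  rw [mul_min_of_nonneg _ _ zero_le_four, ← div_eq_mul_inv, le_min_iff, le_div_iff₀' hx]
  constructor
  · linarith [J0_sq_add_deriv_J0_sq_le_one hx.le, sq_nonneg (J0 x)]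
  · exact mul_deriv_J0_sq_le_four hx.le

theorem one_div_eight_le_mul_deriv_J0_sq (hx : 0 < x) (h0 : J0 x = 0) :
    1 / 8 ≤ x * deriv J0 x ^ 2 := by
  have hamp := monotoneOn_liouvilleJ0_amplitude (a := 1 / 2) (by simp) hx
    (by linarith [one_le_of_J0_eq_zero hx.le h0])
  have hhalf := one_sub_le_J0 (x := 1 / 2) (by norm_num)
  have hq := one_le_liouvilleFreq x
  calc 1 / 8 ≤ liouvilleJ0 (1 / 2) ^ 2 := by
        rw [liouvilleJ0_sq (by norm_num)]
        nlinarith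
    _ ≤ liouvilleJ0 (1 / 2) ^ 2 + liouvilleJ0' (1 / 2) ^ 2 / liouvilleFreq (1 / 2) :=
        le_add_of_nonneg_right <|
          div_nonneg (sq_nonneg _) (zero_le_one.trans (one_le_liouvilleFreq _))
    _ ≤ liouvilleJ0 x ^ 2 + liouvilleJ0' x ^ 2 / liouvilleFreq x := hamp
    _ = x * deriv J0 x ^ 2 / liouvilleFreq x := by
        rw [liouvilleJ0_sq hx.le, liouvilleJ0'_sq hx.le, h0]
        ring
    _ ≤ x * deriv J0 x ^ 2 := div_le_self (by positivity) hq

end Bounds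

theorem integral_le_mul_one_add_log {f : ℝ → ℝ} {A m : ℝ} (hA : 0 ≤ A) (hm : 1 ≤ m)
    (hf : IntervalIntegrable f volume 0 1) (hfm : ∀ r ∈ Ioo 0 1, f r ≤ A * min m r⁻¹) :
    ∫ r in (0 : ℝ)..1, f r ≤ A * (1 + log m) := by
  have hm0 : 0 < m := zero_lt_one.trans_le hm
  have hm1 : m⁻¹ ≤ 1 := inv_le_one_of_one_le₀ hm
  have hf₁ : IntervalIntegrable f volume 0 m⁻¹ :=
    hf.mono_set (by simpa [uIcc_of_le, hm0.le] using Icc_subset_Icc_right hm1)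
  have hf₂ : IntervalIntegrable f volume m⁻¹ 1 :=
    hf.mono_set (by simpa [uIcc_of_le, hm1] using Icc_subset_Icc_left (inv_pos.2 hm0).le)
  have hnear : ∫ r in (0 : ℝ)..m⁻¹, f r ≤ A := by
    calc ∫ r in (0 : ℝ)..m⁻¹, f r ≤ ∫ _ in (0 : ℝ)..m⁻¹, A * m :=
          intervalIntegral.integral_mono_on_of_le_Ioo (inv_pos.2 hm0).le hf₁ (by simp)
            fun r hr ↦ (hfm r ⟨hr.1, hr.2.trans_le hm1⟩).trans
              (mul_le_mul_of_nonneg_left (min_le_left _ _) hA)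
      _ = A := by
        rw [intervalIntegral.integral_const, smul_eq_mul]
        field_simp
        ring
  have hfar : ∫ r in m⁻¹..1, f r ≤ A * log m := by
    have hinv : IntervalIntegrable (fun r : ℝ ↦ r⁻¹) volume m⁻¹ 1 :=
      intervalIntegrable_inv_iff.2 (.inr (by simp [uIcc_of_le hm1, hm0]))
    calc ∫ r in m⁻¹..1, f r ≤ ∫ r in m⁻¹..1, A * r⁻¹ :=
          intervalIntegral.integral_mono_on_of_le_Ioo hm1 hf₂ (hinv.const_mul A)
            fun r hr ↦ (hfm r ⟨(inv_pos.2 hm0).trans hr.1, hr.2⟩).trans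
              (mul_le_mul_of_nonneg_left (min_le_right _ _) hA)
      _ = A * log m := by simp [integral_inv_of_pos (inv_pos.2 hm0) zero_lt_one]
  rw [← intervalIntegral.integral_add_adjacent_intervals hf₁ hf₂, mul_one_add]
  exact add_le_add hnear hfar

theorem min_inv_mul_min_inv_mul_le {a b r : ℝ} (ha : 0 ≤ a) (hb : 0 ≤ b) (hr : 0 < r) :
    min a r⁻¹ * min b r⁻¹ * r ≤ min (min a b) r⁻¹ := by
  have hr' : 0 ≤ r⁻¹ := (inv_pos.2 hr).le
  have har : min a r⁻¹ * r ≤ 1 := by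
    simpa [hr.ne'] using mul_le_mul_of_nonneg_right (min_le_right a r⁻¹) hr.le
  have hbr : min b r⁻¹ * r ≤ 1 := by
    simpa [hr.ne'] using mul_le_mul_of_nonneg_right (min_le_right b r⁻¹) hr.le
  have hleft : min a r⁻¹ * min b r⁻¹ * r ≤ min a r⁻¹ := by
    rw [mul_assoc]
    exact mul_le_of_le_one_right (le_min ha hr') hbr
  have hright : min a r⁻¹ * min b r⁻¹ * r ≤ min b r⁻¹ := by
    rw [mul_right_comm]
    exact mul_le_of_le_one_left (le_min hb hr') har
  exact le_min (le_min (hleft.trans (min_le_left _ _)) (hright.trans (min_le_left _ _)))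
    (hleft.trans (min_le_right _ _))

theorem sqrt_one_add_log_le_rpow {x ε : ℝ} (hx : 1 ≤ x) (hε : 0 < ε) :
    √(1 + log x) ≤ √(1 + 1 / (2 * ε)) * x ^ ε := by
  have hx0 : 0 ≤ x := zero_le_one.trans hx
  have hlog : 1 + log x ≤ (1 + 1 / (2 * ε)) * x ^ (2 * ε) := by
    rw [one_add_mul, one_div_mul_eq_div]
    exact add_le_add (one_le_rpow hx (by positivity)) (log_le_rpow_div hx0 (by positivity))
  have hsq : x ^ (2 * ε) = (x ^ ε) ^ 2 := by
    rw [mul_comm, rpow_mul hx0, rpow_two]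
  calc √(1 + log x) ≤ √((1 + 1 / (2 * ε)) * (x ^ ε) ^ 2) := sqrt_le_sqrt (hsq ▸ hlog)
    _ = √(1 + 1 / (2 * ε)) * x ^ ε := by
      rw [sqrt_mul (by positivity), sqrt_sq (by positivity)]

/-- The norm of `L²(Θ)` on radial functions on the unit disc, given by their profile on
`[0, 1]`. -/
noncomputable def discL2Norm (f : ℝ → ℝ) : ℝ := √(2 * π * ∫ r in (0 : ℝ)..1, f r ^ 2 * r)

section Lommel

variable {w : ℝ}

theorem integral_comp_mul_left_mul_self (g : ℝ → ℝ) (hw : w ≠ 0) :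
    ∫ r in (0 : ℝ)..1, g (w * r) * r = (∫ x in (0 : ℝ)..w, g x * x) / w ^ 2 := by
  have hsubst := intervalIntegral.mul_integral_comp_mul_left (f := fun x ↦ g x * x)
    (a := 0) (b := 1) w
  have hscale : ∫ r in (0 : ℝ)..1, g (w * r) * (w * r) =
      w * ∫ r in (0 : ℝ)..1, g (w * r) * r := by
    rw [← intervalIntegral.integral_const_mul]
    exact intervalIntegral.integral_congr fun r _ ↦ by ring
  rw [hscale, mul_zero, mul_one] at hsubst
  rw [← hsubst]
  field_simp

theorem integral_J0_sq_mul_self (w : ℝ) :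
    ∫ x in (0 : ℝ)..w, J0 x ^ 2 * x = w ^ 2 * (J0 w ^ 2 + deriv J0 w ^ 2) / 2 := by
  have hcont := continuous_J0
  rw [intervalIntegral.integral_eq_sub_of_hasDerivAt
    (f := fun x ↦ ((x * J0 x) ^ 2 + (x * deriv J0 x) ^ 2) / 2) (fun x _ ↦ ?_)
    (Continuous.intervalIntegrable (by fun_prop) _ _)]
  · ring
  · refine (((((hasDerivAt_id x).mul (hasDerivAt_J0 x)).pow 2).add
      ((hasDerivAt_mul_deriv_J0 x).pow 2)).div_const 2).congr_deriv ?_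
    simp only [Pi.mul_apply, id]
    push_cast
    ring

theorem integral_deriv_J0_sq_mul_self (w : ℝ) :
    ∫ x in (0 : ℝ)..w, deriv J0 x ^ 2 * x =
      w ^ 2 * (J0 w ^ 2 + deriv J0 w ^ 2) / 2 + w * deriv J0 w * J0 w := by
  have hcont₀ := continuous_J0
  have hcont₁ := continuous_deriv_J0
  have hparts : ∫ x in (0 : ℝ)..w, (deriv J0 x ^ 2 * x - J0 x ^ 2 * x) = w * deriv J0 w * J0 w := by
    rw [intervalIntegral.integral_eq_sub_of_hasDerivAt (f := fun x ↦ x * deriv J0 x * J0 x)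
      (fun x _ ↦ ?_) (Continuous.intervalIntegrable (by fun_prop) _ _)]
    · ring
    · exact ((hasDerivAt_mul_deriv_J0 x).mul (hasDerivAt_J0 x)).congr_deriv (by ring)
  rw [intervalIntegral.integral_sub (Continuous.intervalIntegrable (by fun_prop) _ _)
    (Continuous.intervalIntegrable (by fun_prop) _ _), integral_J0_sq_mul_self] at hparts
  linarith

end Lommel

section Eigenfunctions

variable {z : ℕ → ℝ} {n n₁ n₂ : ℕ} {r : ℝ}

theorem besselL2_sq (hpos : 0 < z n) (h0 : J0 (z n) = 0) :
    besselL2 z n ^ 2 = π * deriv J0 (z n) ^ 2 := by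
  rw [besselL2, integral_comp_mul_left_mul_self (fun x ↦ J0 x ^ 2) hpos.ne',
    integral_J0_sq_mul_self, h0, sq_sqrt (by positivity)]
  field_simp
  ring

theorem pi_div_eight_le_mul_besselL2_sq (hpos : 0 < z n) (h0 : J0 (z n) = 0) :
    π / 8 ≤ z n * besselL2 z n ^ 2 := by
  rw [besselL2_sq hpos h0]
  nlinarith [one_div_eight_le_mul_deriv_J0_sq hpos h0, pi_pos]

theorem discL2Norm_efun' (hpos : 0 < z n) (h0 : J0 (z n) = 0) :
    discL2Norm (efun' z n) = z n := by
  have hderiv : deriv J0 (z n) ≠ 0 := fun h ↦ by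
    linarith [h ▸ one_div_eight_le_mul_deriv_J0_sq hpos h0]
  have hscale (r : ℝ) : efun' z n r ^ 2 * r =
      z n ^ 2 / besselL2 z n ^ 2 * (deriv J0 (z n * r) ^ 2 * r) := by
    rw [efun', div_pow, mul_pow]
    ring
  have hsq : 2 * π * ∫ r in (0 : ℝ)..1, efun' z n r ^ 2 * r = z n ^ 2 := by
    rw [funext hscale, intervalIntegral.integral_const_mul,
      integral_comp_mul_left_mul_self (fun x ↦ deriv J0 x ^ 2) hpos.ne',
      integral_deriv_J0_sq_mul_self, besselL2_sq hpos h0, h0]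
    field_simp
    ring
  rw [discL2Norm, hsq, sqrt_sq hpos.le]

theorem div_besselL2_sq_le {t : ℝ} (hpos : 0 < z n) (h0 : J0 (z n) = 0)
    (ht : t ≤ 4 * min 1 (z n * r)⁻¹) (hr : 0 < r) :
    t / besselL2 z n ^ 2 ≤ 32 / π * min (z n) r⁻¹ := by
  have hnorm := pi_div_eight_le_mul_besselL2_sq hpos h0
  have hsq : 0 < besselL2 z n ^ 2 :=
    pos_of_mul_pos_right ((by positivity : 0 < π / 8).trans_le hnorm) hpos.le
  have hmin : z n * min 1 (z n * r)⁻¹ = min (z n) r⁻¹ := by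
    rw [mul_min_of_nonneg _ _ hpos.le, mul_one, mul_inv, mul_inv_cancel_left₀ hpos.ne']
  rw [div_le_iff₀ hsq, ← hmin]
  calc t ≤ 4 * min 1 (z n * r)⁻¹ := ht
    _ = 32 / π * min 1 (z n * r)⁻¹ * (π / 8) := by
      field_simp
      norm_num
    _ ≤ 32 / π * min 1 (z n * r)⁻¹ * (z n * besselL2 z n ^ 2) := by gcongr
    _ = 32 / π * (z n * min 1 (z n * r)⁻¹) * besselL2 z n ^ 2 := by ring

theorem efun_sq_le (hpos : 0 < z n) (h0 : J0 (z n) = 0) (hr : 0 < r) :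
    efun z n r ^ 2 ≤ 32 / π * min (z n) r⁻¹ := by
  rw [efun, div_pow]
  exact div_besselL2_sq_le hpos h0 (J0_sq_le_four_mul_min (mul_pos hpos hr)) hr

theorem efun'_sq_le (hpos : 0 < z n) (h0 : J0 (z n) = 0) (hr : 0 < r) :
    efun' z n r ^ 2 ≤ z n ^ 2 * (32 / π * min (z n) r⁻¹) := by
  rw [efun', div_pow, mul_pow, mul_div_assoc]
  gcongr
  exact div_besselL2_sq_le hpos h0 (deriv_J0_sq_le_four_mul_min (mul_pos hpos hr)) hr

theorem efun_mul_efun'_sq_mul_le (hpos₁ : 0 < z n₁) (hpos₂ : 0 < z n₂) (h₁ : J0 (z n₁) = 0)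
    (h₂ : J0 (z n₂) = 0) (hr : 0 < r) :
    (efun z n₁ r * efun' z n₂ r) ^ 2 * r ≤
      (32 / π * z n₂) ^ 2 * min (min (z n₁) (z n₂)) r⁻¹ := by
  calc (efun z n₁ r * efun' z n₂ r) ^ 2 * r
      = efun z n₁ r ^ 2 * efun' z n₂ r ^ 2 * r := by rw [mul_pow]
    _ ≤ 32 / π * min (z n₁) r⁻¹ * (z n₂ ^ 2 * (32 / π * min (z n₂) r⁻¹)) * r := by
      gcongr
      · exact efun_sq_le hpos₁ h₁ hr
      · exact efun'_sq_le hpos₂ h₂ hr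
    _ = (32 / π * z n₂) ^ 2 * (min (z n₁) r⁻¹ * min (z n₂) r⁻¹ * r) := by ring
    _ ≤ (32 / π * z n₂) ^ 2 * min (min (z n₁) (z n₂)) r⁻¹ := by
      gcongr
      exact min_inv_mul_min_inv_mul_le hpos₁.le hpos₂.le hr

theorem continuous_efun (z : ℕ → ℝ) (n : ℕ) : Continuous (efun z n) :=
  (continuous_J0.comp (continuous_const_mul _)).div_const _

theorem continuous_efun' (z : ℕ → ℝ) (n : ℕ) : Continuous (efun' z n) :=
  ((continuous_deriv_J0.comp (continuous_const_mul _)).const_mul _).div_const _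

theorem discL2Norm_efun_mul_efun'_le (hpos₁ : 0 < z n₁) (hpos₂ : 0 < z n₂) (h₁ : J0 (z n₁) = 0)
    (h₂ : J0 (z n₂) = 0) :
    discL2Norm (fun r ↦ efun z n₁ r * efun' z n₂ r) ≤
      √(2 * π) * (32 / π) * √(1 + log (min (z n₁) (z n₂))) * discL2Norm (efun' z n₂) := by
  have hm : 1 ≤ min (z n₁) (z n₂) :=
    le_min (one_le_of_J0_eq_zero hpos₁.le h₁) (one_le_of_J0_eq_zero hpos₂.le h₂)
  have hcont : Continuous fun r ↦ (efun z n₁ r * efun' z n₂ r) ^ 2 * r :=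
    (((continuous_efun z n₁).mul (continuous_efun' z n₂)).pow 2).mul continuous_id
  have hint := integral_le_mul_one_add_log (sq_nonneg (32 / π * z n₂)) hm
    (hcont.intervalIntegrable 0 1)
    fun r hr ↦ efun_mul_efun'_sq_mul_le hpos₁ hpos₂ h₁ h₂ hr.1
  rw [discL2Norm_efun' hpos₂ h₂]
  calc discL2Norm (fun r ↦ efun z n₁ r * efun' z n₂ r)
      ≤ √(2 * π * ((32 / π * z n₂) ^ 2 * (1 + log (min (z n₁) (z n₂))))) := by
        unfold discL2Norm
        gcongr
    _ = √(2 * π) * (32 / π) * √(1 + log (min (z n₁) (z n₂))) * z n₂ := by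
      rw [sqrt_mul (by positivity), sqrt_mul (sq_nonneg _), sqrt_sq (by positivity)]
      ring

end Eigenfunctions

section ZeroEnumeration

variable {z : ℕ → ℝ} {n : ℕ}

theorem zero_succ_le_add_pi (hzmono : MonotoneOn z (Ici 1))
    (hzall : ∀ x : ℝ, 0 < x → J0 x = 0 → ∃ n, 1 ≤ n ∧ z n = x) {a : ℝ} (ha : 0 < a)
    (hza : ∀ k, 1 ≤ k → k ≤ n → z k ≤ a) : z (n + 1) ≤ a + π := by
  obtain ⟨x, hx, hx0⟩ := exists_mem_Ioc_J0_eq_zero ha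
  obtain ⟨k, hk, rfl⟩ := hzall x (ha.trans hx.1) hx0
  have hnk : n + 1 ≤ k := by
    by_contra! hkn
    exact (hza k hk (Nat.lt_succ_iff.1 hkn)).not_gt hx.1
  exact (hzmono (Nat.le_add_left 1 n) hk hnk).trans hx.2

theorem zero_le_one_add_pi_mul (hzmono : MonotoneOn z (Ici 1))
    (hzall : ∀ x : ℝ, 0 < x → J0 x = 0 → ∃ n, 1 ≤ n ∧ z n = x) (hn : 1 ≤ n) :
    z n ≤ 1 + π * n := by
  induction n using Nat.strong_induction_on with
  | _ n ih =>
    obtain ⟨m, rfl⟩ := Nat.exists_eq_add_of_le' hn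
    have hgap := zero_succ_le_add_pi hzmono hzall (a := 1 + π * m) (by positivity)
      fun k hk hkm ↦ (ih k (Nat.lt_succ_iff.2 hkm) hk).trans (by gcongr)
    push_cast
    linarith

theorem zero_le_five_mul (hzmono : MonotoneOn z (Ici 1))
    (hzall : ∀ x : ℝ, 0 < x → J0 x = 0 → ∃ n, 1 ≤ n ∧ z n = x) (hn : 1 ≤ n) :
    z n ≤ 5 * n := by
  have hn1 : (1 : ℝ) ≤ n := mod_cast hn
  nlinarith [zero_le_one_add_pi_mul hzmono hzall hn, pi_lt_four]

theorem sqrt_one_add_log_zero_le (hzmono : MonotoneOn z (Ici 1))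
    (hzall : ∀ x : ℝ, 0 < x → J0 x = 0 → ∃ n, 1 ≤ n ∧ z n = x) (hn : 1 ≤ n) (hz : 1 ≤ z n)
    {ε : ℝ} (hε : 0 < ε) :
    √(1 + log (z n)) ≤ √(1 + 1 / (2 * ε)) * 5 ^ ε * (n : ℝ) ^ ε := by
  rw [mul_assoc, ← mul_rpow (by norm_num) (Nat.cast_nonneg _)]
  refine (sqrt_one_add_log_le_rpow hz hε).trans ?_
  gcongr
  exact zero_le_five_mul hzmono hzall hn

end ZeroEnumeration

/-- Bilinear estimate with one derivative: for every `ε > 0` there is `C_ε` with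
`‖e_{n₁} e_{n₂}′‖_{L²(Θ)} ≤ C_ε (min(n₁,n₂))^ε ‖e_{n₂}′‖_{L²(Θ)}` for all `n₁, n₂ ≥ 1`. -/
theorem eigenfunction_bilinear_deriv_L2
    (z : ℕ → ℝ)
    (hzpos : ∀ n, 1 ≤ n → 0 < z n)
    (hzmono : ∀ m n, 1 ≤ m → m < n → z m < z n)
    (hzzero : ∀ n, 1 ≤ n → J0 (z n) = 0)
    (hzall : ∀ x : ℝ, 0 < x → J0 x = 0 → ∃ n, 1 ≤ n ∧ z n = x) :
    ∀ ε : ℝ, 0 < ε → ∃ C : ℝ, 0 < C ∧ ∀ n₁ n₂ : ℕ, 1 ≤ n₁ → 1 ≤ n₂ →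
      Real.sqrt (2 * Real.pi * ∫ r in (0 : ℝ)..1, (efun z n₁ r * efun' z n₂ r) ^ 2 * r) ≤
        C * ((min n₁ n₂ : ℕ) : ℝ) ^ ε *
          Real.sqrt (2 * Real.pi * ∫ r in (0 : ℝ)..1, (efun' z n₂ r) ^ 2 * r) := by
  intro ε hε
  have hmono : MonotoneOn z (Ici 1) :=
    StrictMonoOn.monotoneOn fun m hm n _ hmn ↦ hzmono m n hm hmn
  refine ⟨√(2 * π) * (32 / π) * (√(1 + 1 / (2 * ε)) * 5 ^ ε), by positivity,
    fun n₁ n₂ hn₁ hn₂ ↦ ?_⟩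
  have hn : 1 ≤ min n₁ n₂ := le_min hn₁ hn₂
  have hlog := sqrt_one_add_log_zero_le hmono hzall hn
    (one_le_of_J0_eq_zero (hzpos _ hn).le (hzzero _ hn)) hε
  calc discL2Norm (fun r ↦ efun z n₁ r * efun' z n₂ r)
      ≤ √(2 * π) * (32 / π) * √(1 + log (z (min n₁ n₂))) * discL2Norm (efun' z n₂) := by
        rw [hmono.map_min hn₁ hn₂]
        exact discL2Norm_efun_mul_efun'_le (hzpos n₁ hn₁) (hzpos n₂ hn₂) (hzzero n₁ hn₁)
          (hzzero n₂ hn₂)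
    _ ≤ √(2 * π) * (32 / π) * (√(1 + 1 / (2 * ε)) * 5 ^ ε * ((min n₁ n₂ : ℕ) : ℝ) ^ ε) *
          discL2Norm (efun' z n₂) := by
        gcongr
        exact sqrt_nonneg _
    _ = √(2 * π) * (32 / π) * (√(1 + 1 / (2 * ε)) * 5 ^ ε) * ((min n₁ n₂ : ℕ) : ℝ) ^ ε *
          discL2Norm (efun' z n₂) := by ring
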